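/- If f, g : ℝ^N → [0, ∞] are Borel measurable and φ is a Young function, then f⊼g is Lebesgue measurable and ‖f⊼g‖_φ ≤ 2^{N−1} ( ‖f̂‖_φ + ‖ĝ‖_φ ). -/

import Mathlib

open MeasureTheory Filter Set
open scoped ENNReal NNReal Pointwise

noncomputable section

/-- `ℝ^N` with the Euclidean structure and Lebesgue measure. -/
abbrev ES (N : ℕ) := EuclideanSpace ℝ (Fin N)

variable {N : ℕ}

/-- The operation `(f ⊼ g)(x) = sup_y min (f (x - y)) (g y)` for extended-real valued
functions. -/
def supMinE (f g : ES N → EReal) (x : ES N) : EReal := ⨆ y, min (f (x - y)) (g y)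

/-- The operation `(f ⊻ g)(x) = inf_y max (f (x - y)) (g y)` for extended-real valued
functions. -/
def infMaxE (f g : ES N → EReal) (x : ES N) : EReal := ⨅ y, max (f (x - y)) (g y)

/-- The infimal convolution `(f □ g)(x) = inf_y (f (x - y) + g y)`. -/
def infConvE (f g : ES N → EReal) (x : ES N) : EReal := ⨅ y, (f (x - y) + g y)

/-- The operation `(f ⊼ g)(x) = sup_y min (f (x - y)) (g y)` for `[0,∞]`-valued functions. -/
def supMin (f g : ES N → ℝ≥0∞) (x : ES N) : ℝ≥0∞ := ⨆ y, min (f (x - y)) (g y)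

/-- A Young function: a nonconstant, nondecreasing, convex, left-continuous
`φ : [0,∞] → [0,∞]` with `φ 0 = 0`. -/
structure IsYoungFunction (φ : ℝ≥0∞ → ℝ≥0∞) : Prop where
  nonconstant : ∃ x y, φ x ≠ φ y
  map_zero : φ 0 = 0
  mono : Monotone φ
  convex : ∀ ⦃a b x y : ℝ≥0∞⦄, a + b = 1 → φ (a * x + b * y) ≤ a * φ x + b * φ y
  left_continuous : ∀ x, ContinuousWithinAt φ (Set.Iio x) x

/-- The Luxemburg norm `‖h‖_φ = inf {r > 0 | ∫ φ (r⁻¹ |h|) ≤ 1}` (`= ∞` if no such `r`),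
for a nonnegative function `h`. -/
def luxNorm (φ : ℝ≥0∞ → ℝ≥0∞) (h : ES N → ℝ≥0∞) : ℝ≥0∞ :=
  sInf {r : ℝ≥0∞ | 0 < r ∧ ∫⁻ x, φ (r⁻¹ * h x) ≤ 1}

/-- The nonnegative part of an extended real, as an element of `[0,∞]`. -/
def toENN (a : EReal) : ℝ≥0∞ := if a = ⊤ then ⊤ else ENNReal.ofReal a.toReal

/-- The reciprocal `1/a ∈ [0,∞]` of an extended real (intended for `a ≥ 0`), with the
conventions `1/0 = ∞` and `1/∞ = 0`. -/
def eInv (a : EReal) : ℝ≥0∞ := (toENN a)⁻¹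

/-- The enclosing radius of a set `X ⊆ ℝ^N`: the infimum of the radii of closed balls
containing `X` (`0` for `X = ∅`, `∞` if `X` is unbounded). -/
def encRadius (X : Set (ES N)) : ℝ≥0∞ := sInf {r : ℝ≥0∞ | ∃ c : ES N, ∀ x ∈ X, edist x c ≤ r}

/-- The transform `f̂(x) = γ_f^+(|x|)` where `γ_f^+(t) = inf {ξ | ρ_f^+(ξ) ≤ t}` and
`ρ_f^+(ξ)` is the enclosing radius of the upper level set `{f > ξ}`. -/
def hatE (f : ES N → EReal) (x : ES N) : EReal :=
  sInf {ξ : EReal | encRadius {y | ξ < f y} ≤ (‖x‖₊ : ℝ≥0∞)}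

/-- The lower transform `f̌ = -((-f)^)`. -/
def checkE (f : ES N → EReal) (x : ES N) : EReal := - hatE (fun y => - f y) x

/-- The transform `f̂` for `[0,∞]`-valued functions. -/
def hatT (f : ES N → ℝ≥0∞) (x : ES N) : ℝ≥0∞ :=
  sInf {ξ : ℝ≥0∞ | encRadius {y | ξ < f y} ≤ (‖x‖₊ : ℝ≥0∞)}

/-- The lower transform `f̌(x) = γ_f^-(|x|)`, `γ_f^-(t) = sup {ξ | ρ({f < ξ}) ≤ t}`,
for `[0,∞]`-valued functions. -/
def checkT (f : ES N → ℝ≥0∞) (x : ES N) : ℝ≥0∞ :=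
  sSup {ξ : ℝ≥0∞ | encRadius {y | f y < ξ} ≤ (‖x‖₊ : ℝ≥0∞)}

/-- The `L^p` "norm" (`p ∈ [1,∞]`, essential supremum when `p = ∞`) of a `[0,∞]`-valued
function. -/
def pNorm (p : ℝ≥0∞) (h : ES N → ℝ≥0∞) : ℝ≥0∞ :=
  if p = ∞ then essSup h volume else (∫⁻ x, h x ^ p.toReal) ^ (1 / p.toReal)

/-- An open set containing the compact box `{x | ∀ i, x i ≤ n i}` contains one of the
partial boxes. -/
theorem exists_partialBox_subset_of_isOpen {n : ℕ → ℕ} {V : Set (ℕ → ℕ)} (hV : IsOpen V)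
    (hnV : {x : ℕ → ℕ | ∀ i, x i ≤ n i} ⊆ V) : ∃ m, {x : ℕ → ℕ | ∀ i < m, x i ≤ n i} ⊆ V := by
  by_contra! hcon
  simp only [Set.not_subset] at hcon
  choose x hx hxV using hcon
  have hC : IsCompact (Set.univ.pi fun i => Set.Iic
      (n i + ∑ j ∈ Finset.range (i + 1), x j i)) :=
    isCompact_univ_pi fun i => (Set.finite_Iic _).isCompact
  have hxC : ∀ m, x m ∈ Set.univ.pi fun i => Set.Iic
      (n i + ∑ j ∈ Finset.range (i + 1), x j i) := by
    intro m i _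
    rcases lt_or_ge i m with h | h
    · exact (hx m i h).trans (Nat.le_add_right _ _)
    · exact (Finset.single_le_sum (f := fun j => x j i) (fun _ _ => Nat.zero_le _)
        (Finset.mem_range.2 (Nat.lt_succ_of_le h))).trans (Nat.le_add_left _ _)
  obtain ⟨y, -, k, hk, hlim⟩ := hC.tendsto_subseq hxC
  have hy : y ∈ Vᶜ := hV.isClosed_compl.mem_of_tendsto hlim (Eventually.of_forall fun m => hxV _)
  refine hy (hnV fun i => ?_)
  refine le_of_tendsto ((continuous_apply i).continuousAt.tendsto.comp hlim) ?_
  filter_upwards [eventually_gt_atTop i] with m hm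
  exact hx _ _ (hm.trans_le (hk.id_le m))

/-- Analytic sets are inner regular for compact sets, for an outer regular measure. -/
theorem MeasureTheory.AnalyticSet.exists_isCompact_le_measure {α : Type*} [TopologicalSpace α]
    [MeasurableSpace α] {μ : Measure α} [μ.OuterRegular] {s : Set α}
    (hs : AnalyticSet s) {c : ℝ≥0∞} (hc : c < μ s) : ∃ K ⊆ s, IsCompact K ∧ c ≤ μ K := by
  rw [AnalyticSet] at hs
  rcases hs with rfl | ⟨f, hf, rfl⟩
  · simp at hc
  have step : ∀ (m : ℕ) (S : {S : Set (ℕ → ℕ) // c < μ (f '' S)}),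
      ∃ k, c < μ (f '' (S.1 ∩ {x | x m ≤ k})) := by
    rintro m ⟨S, hS⟩
    have hmono : Monotone fun k : ℕ => f '' (S ∩ {x | x m ≤ k}) := fun k l hkl =>
      Set.image_mono (Set.inter_subset_inter_right _ fun x (hx : x m ≤ k) => hx.trans hkl)
    have hU : ⋃ k : ℕ, f '' (S ∩ {x | x m ≤ k}) = f '' S := by
      rw [← Set.image_iUnion, ← Set.inter_iUnion]
      congr 1
      refine Set.inter_eq_left.2 fun x _ => Set.mem_iUnion.2 ⟨x m, le_refl (x m)⟩
    rw [← hU, hmono.measure_iUnion] at hS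
    exact lt_iSup_iff.1 hS
  choose k hk using step
  let S : ℕ → {S : Set (ℕ → ℕ) // c < μ (f '' S)} := fun m =>
    Nat.rec ⟨Set.univ, by simpa using hc⟩ (fun m S => ⟨S.1 ∩ {x | x m ≤ k m S}, hk m S⟩) m
  let n : ℕ → ℕ := fun m => k m (S m)
  have hS : ∀ m, (S m).1 = {x | ∀ i < m, x i ≤ n i} := by
    intro m
    induction m with
    | zero => simp [S]
    | succ m ih =>
      change (S m).1 ∩ {x | x m ≤ n m} = _
      rw [ih]
      ext x
      simp only [Set.mem_inter_iff, Set.mem_ofPred_eq, Nat.lt_succ_iff_lt_or_eq, or_imp,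
        forall_and, forall_eq]
  have hK : IsCompact {x : ℕ → ℕ | ∀ i, x i ≤ n i} := by
    have : {x : ℕ → ℕ | ∀ i, x i ≤ n i} = Set.univ.pi fun i => Set.Iic (n i) := by
      ext x; simp [Pi.le_def]
    rw [this]
    exact isCompact_univ_pi fun i => (Set.finite_Iic _).isCompact
  refine ⟨f '' {x | ∀ i, x i ≤ n i}, Set.image_subset_range _ _, hK.image hf, ?_⟩
  by_contra! hlt
  obtain ⟨U, hU, hUo, hUc⟩ := Set.exists_isOpen_lt_of_lt _ _ hlt
  obtain ⟨m, hm⟩ := exists_partialBox_subset_of_isOpen (hUo.preimage hf) (Set.image_subset_iff.1 hU)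
  rw [← hS] at hm
  exact absurd ((S m).2.trans_le (measure_mono (Set.image_subset_iff.2 hm))) hUc.not_gt

theorem MeasureTheory.AnalyticSet.nullMeasurableSet_of_measure_ne_top {α : Type*}
    [TopologicalSpace α] [T2Space α] [MeasurableSpace α] [OpensMeasurableSpace α] {μ : Measure α}
    [μ.OuterRegular] {s : Set α} (hs : AnalyticSet s) (hμ : μ s ≠ ∞) : NullMeasurableSet s μ := by
  rcases eq_or_ne (μ s) 0 with h0 | h0
  · exact NullMeasurableSet.of_null h0
  obtain ⟨u, -, hu, hlim⟩ := exists_seq_strictMono_tendsto' (pos_iff_ne_zero.2 h0)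
  choose K hKs hK hle using fun n => hs.exists_isCompact_le_measure (hu n).2
  have hm : MeasurableSet (⋃ n, K n) := MeasurableSet.iUnion fun n => (hK n).measurableSet
  have hsub : ⋃ n, K n ⊆ s := Set.iUnion_subset hKs
  have hge : μ s ≤ μ (⋃ n, K n) :=
    le_of_tendsto' hlim fun n => (hle n).trans (measure_mono (Set.subset_iUnion K n))
  exact hm.nullMeasurableSet.congr (ae_eq_of_subset_of_measure_ge hsub hge hm.nullMeasurableSet hμ)

/-- Analytic sets of a proper metric space are null measurable. -/
theorem MeasureTheory.AnalyticSet.nullMeasurableSet {α : Type*} [MetricSpace α] [ProperSpace α]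
    [MeasurableSpace α] [BorelSpace α] {μ : Measure α} [μ.OuterRegular]
    [IsFiniteMeasureOnCompacts μ] {s : Set α} (hs : AnalyticSet s) : NullMeasurableSet s μ := by
  rcases isEmpty_or_nonempty α with h | ⟨⟨o⟩⟩
  · rw [Set.eq_empty_of_isEmpty s]
    exact MeasurableSet.empty.nullMeasurableSet
  have h : s = ⋃ n : ℕ, s ∩ Metric.closedBall o n := by
    rw [← Set.inter_iUnion, Metric.iUnion_closedBall_nat, Set.inter_univ]
  rw [h]
  refine NullMeasurableSet.iUnion fun n => ?_
  refine AnalyticSet.nullMeasurableSet_of_measure_ne_top ?_ ?_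
  · rw [Set.inter_eq_iInter]
    exact AnalyticSet.iInter fun b => by
      cases b
      · exact Metric.isClosed_closedBall.analyticSet
      · exact hs
  · exact measure_ne_top_of_subset Set.inter_subset_right
      (isCompact_closedBall o _).measure_lt_top.ne

theorem setOf_lt_supMin (f g : ES N → ℝ≥0∞) (ξ : ℝ≥0∞) :
    {x | ξ < supMin f g x} = {x | ξ < f x} + {x | ξ < g x} := by
  ext x
  simp only [supMin, lt_iSup_iff, lt_min_iff, Set.mem_ofPred_eq, Set.mem_add]
  constructor
  · rintro ⟨y, h1, h2⟩
    exact ⟨x - y, h1, y, h2, sub_add_cancel x y⟩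
  · rintro ⟨a, ha, y, hy, rfl⟩
    exact ⟨y, by simpa using ha, hy⟩

theorem aemeasurable_supMin {f g : ES N → ℝ≥0∞} (hf : Measurable f) (hg : Measurable g) :
    AEMeasurable (supMin f g) (volume : Measure (ES N)) := by
  refine NullMeasurable.aemeasurable fun s hs => ?_
  refine measurable_of_Ioi (δ := NullMeasurableSpace (ES N) volume) (fun ξ => ?_) hs
  change NullMeasurableSet {x | ξ < supMin f g x} volume
  rw [setOf_lt_supMin, ← Set.add_image_prod]
  refine AnalyticSet.nullMeasurableSet (AnalyticSet.image_of_continuous ?_ continuous_add)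
  exact ((measurableSet_lt measurable_const hf).prod
    (measurableSet_lt measurable_const hg)).analyticSet

theorem encRadius_mono {X Y : Set (ES N)} (h : X ⊆ Y) : encRadius X ≤ encRadius Y :=
  sInf_le_sInf fun _ ⟨c, hc⟩ => ⟨c, fun x hx => hc x (h hx)⟩

theorem encRadius_add_le (X Y : Set (ES N)) : encRadius (X + Y) ≤ encRadius X + encRadius Y := by
  unfold encRadius
  rw [ENNReal.sInf_add]
  refine le_iInf₂ fun r ⟨c, hc⟩ => ?_
  rw [ENNReal.add_sInf]
  refine le_iInf₂ fun s ⟨d, hd⟩ => sInf_le ⟨c + d, ?_⟩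
  rintro _ ⟨x, hx, y, hy, rfl⟩
  exact (edist_add_add_le x y c d).trans (add_le_add (hc x hx) (hd y hy))

theorem volume_setOf_nnnorm_lt (hN : 0 < N) (r : ℝ≥0∞) :
    volume {x : ES N | (‖x‖₊ : ℝ≥0∞) < r} = r ^ N * volume (Metric.ball (0 : ES N) 1) := by
  have : Nonempty (Fin N) := ⟨⟨0, hN⟩⟩
  rcases eq_or_ne r ∞ with rfl | hr
  · have hball : volume (Metric.ball (0 : ES N) 1) ≠ 0 :=
      (Metric.measure_ball_pos _ _ one_pos).ne'
    rw [ENNReal.top_pow hN.ne', ENNReal.top_mul hball]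
    simp
  · lift r to ℝ≥0 using hr
    have h : {x : ES N | (‖x‖₊ : ℝ≥0∞) < r} = Metric.ball 0 (r : ℝ) := by
      ext x
      simp [← NNReal.coe_lt_coe]
    rw [h, Measure.addHaar_ball _ _ r.coe_nonneg, finrank_euclideanSpace_fin,
      ENNReal.ofReal_pow r.coe_nonneg, ENNReal.ofReal_coe_nnreal]

theorem volume_le_encRadius_pow (hN : 0 < N) (X : Set (ES N)) :
    volume X ≤ encRadius X ^ N * volume (Metric.ball (0 : ES N) 1) := by
  have hball : volume (Metric.ball (0 : ES N) 1) ≠ ∞ := measure_ball_lt_top.ne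
  rcases eq_or_ne (encRadius X) ∞ with htop | htop
  · rw [htop, ENNReal.top_pow hN.ne',
      ENNReal.top_mul (Metric.measure_ball_pos _ _ one_pos).ne']
    exact le_top
  have hle : ∀ r > encRadius X, volume X ≤ r ^ N * volume (Metric.ball (0 : ES N) 1) := by
    intro r hr
    obtain ⟨s, ⟨c, hc⟩, hsr⟩ := sInf_lt_iff.1 hr
    have hs : s ≠ ∞ := hsr.ne_top
    lift s to ℝ≥0 using hs
    calc volume X ≤ volume (Metric.closedBall c (s : ℝ)) := by
          refine measure_mono fun x hx => ?_
          have := hc x hx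
          rwa [edist_nndist, ENNReal.coe_le_coe, ← NNReal.coe_le_coe, coe_nndist] at this
      _ = (s : ℝ≥0∞) ^ N * volume (Metric.ball (0 : ES N) 1) := by
          rw [Measure.addHaar_closedBall _ _ s.coe_nonneg, finrank_euclideanSpace_fin,
            ENNReal.ofReal_pow s.coe_nonneg, ENNReal.ofReal_coe_nnreal]
      _ ≤ _ := by gcongr
  have hcont : Continuous fun r : ℝ≥0∞ => r ^ N * volume (Metric.ball (0 : ES N) 1) :=
    (ENNReal.continuous_mul_const hball).comp (ENNReal.continuous_pow N)
  have : (nhdsWithin (encRadius X) (Set.Ioi (encRadius X))).NeBot :=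
    nhdsGT_neBot_of_exists_gt ⟨∞, htop.lt_top⟩
  exact ge_of_tendsto (hcont.continuousWithinAt (s := Set.Ioi _))
    (eventually_nhdsWithin_of_forall hle)

theorem measurable_hatT (f : ES N → ℝ≥0∞) : Measurable (hatT f) := by
  have h : Antitone fun t : ℝ≥0∞ => sInf {ξ : ℝ≥0∞ | encRadius {y | ξ < f y} ≤ t} :=
    fun s t hst => sInf_le_sInf fun ξ hξ => le_trans hξ hst
  exact h.measurable.comp measurable_nnnorm.coe_nnreal_ennreal

theorem le_hatT_of_lt_encRadius {f : ES N → ℝ≥0∞} {ζ : ℝ≥0∞} {x : ES N}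
    (hx : (‖x‖₊ : ℝ≥0∞) < encRadius {y | ζ < f y}) : ζ ≤ hatT f x := by
  refine le_sInf fun ξ hξ => ?_
  by_contra! hlt
  exact (hx.trans_le (encRadius_mono fun y hy => hlt.trans hy)).not_ge hξ

theorem ENNReal.add_pow_le_two_pow_mul (a b : ℝ≥0∞) {n : ℕ} (hn : 0 < n) :
    (a + b) ^ n ≤ 2 ^ (n - 1) * (a ^ n + b ^ n) := by
  rcases eq_or_ne a ∞ with rfl | ha
  · simp [hn.ne']
  rcases eq_or_ne b ∞ with rfl | hb
  · simp [hn.ne']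
  lift a to ℝ≥0 using ha
  lift b to ℝ≥0 using hb
  have h : (a + b) ^ n ≤ 2 ^ (n - 1) * (a ^ n + b ^ n) := add_pow_le a.2 b.2 n
  exact_mod_cast h

theorem volume_setOf_lt_supMin_le (hN : 0 < N) (f g : ES N → ℝ≥0∞) (ξ : ℝ≥0∞) :
    volume {x | ξ < supMin f g x} ≤
      2 ^ (N - 1) * (volume {x | ξ < hatT f x} + volume {x | ξ < hatT g x}) := by
  rcases eq_or_ne ξ ∞ with rfl | hξ
  · simp
  obtain ⟨u, hu, hmem, hlim⟩ := exists_seq_strictAnti_tendsto' hξ.lt_top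
  have hunion : {x | ξ < supMin f g x} = ⋃ n, {x | u n < supMin f g x} := by
    ext x
    simp only [Set.mem_ofPred_eq, Set.mem_iUnion]
    exact ⟨fun h => (hlim.eventually_lt_const h).exists, fun ⟨n, hn⟩ => (hmem n).1.trans hn⟩
  have hmono : Monotone fun n => {x | u n < supMin f g x} :=
    fun m n hmn x hx => (hu.antitone hmn).trans_lt hx
  have hhat : ∀ (h : ES N → ℝ≥0∞) (n : ℕ), encRadius {y | u n < h y} ^ N *
      volume (Metric.ball (0 : ES N) 1) ≤ volume {x | ξ < hatT h x} := fun h n => by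
    rw [← volume_setOf_nnnorm_lt hN]
    exact measure_mono fun x hx => (hmem n).1.trans_le (le_hatT_of_lt_encRadius hx)
  rw [hunion, hmono.measure_iUnion]
  refine iSup_le fun n => ?_
  rw [setOf_lt_supMin]
  calc _ ≤ _ := volume_le_encRadius_pow hN _
    _ ≤ (encRadius {y | u n < f y} + encRadius {y | u n < g y}) ^ N *
        volume (Metric.ball (0 : ES N) 1) := by gcongr; exact encRadius_add_le _ _
    _ ≤ 2 ^ (N - 1) * (encRadius {y | u n < f y} ^ N + encRadius {y | u n < g y} ^ N) *
        volume (Metric.ball (0 : ES N) 1) := by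
      gcongr; exact ENNReal.add_pow_le_two_pow_mul _ _ hN
    _ ≤ _ := by
      rw [mul_assoc, add_mul]
      gcongr
      · exact hhat f n
      · exact hhat g n

theorem volume_Ioi_inter_setOf_ofReal_lt (a : ℝ≥0∞) :
    volume (Set.Ioi (0 : ℝ) ∩ {t | ENNReal.ofReal t < a}) = a := by
  rcases eq_or_ne a ∞ with rfl | ha
  · simp
  lift a to ℝ≥0 using ha
  have h : Set.Ioi (0 : ℝ) ∩ {t | ENNReal.ofReal t < a} = Set.Ioo 0 (a : ℝ) := by
    ext t
    simp only [Set.mem_inter_iff, Set.mem_Ioi, Set.mem_ofPred_eq, Set.mem_Ioo]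
    refine and_congr_right fun ht => ?_
    rw [ENNReal.ofReal_lt_iff_lt_toReal ht.le ENNReal.coe_ne_top, ENNReal.coe_toReal]
  rw [h, Real.volume_Ioo, sub_zero, ENNReal.ofReal_coe_nnreal]

/-- The layer cake formula for `[0,∞]`-valued functions. -/
theorem lintegral_eq_lintegral_meas_ofReal_lt {α : Type*} [MeasurableSpace α] {μ : Measure α}
    [SFinite μ] {h : α → ℝ≥0∞} (hh : AEMeasurable h μ) :
    ∫⁻ x, h x ∂μ = ∫⁻ t in Set.Ioi (0 : ℝ), μ {x | ENNReal.ofReal t < h x} := by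
  wlog hm : Measurable h generalizing h
  · rw [lintegral_congr_ae hh.ae_eq_mk, this hh.measurable_mk.aemeasurable hh.measurable_mk]
    refine lintegral_congr fun t => measure_congr ?_
    filter_upwards [hh.ae_eq_mk] with x hx
    exact congrArg (ENNReal.ofReal t < ·) hx.symm
  have hmeas : MeasurableSet {p : α × ℝ | ENNReal.ofReal p.2 < h p.1} :=
    measurableSet_lt (ENNReal.measurable_ofReal.comp measurable_snd) (hm.comp measurable_fst)
  calc ∫⁻ x, h x ∂μ
      = ∫⁻ x, (∫⁻ t in Set.Ioi (0 : ℝ),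
          {p : α × ℝ | ENNReal.ofReal p.2 < h p.1}.indicator 1 (x, t)) ∂μ := by
        refine lintegral_congr fun x => ?_
        have hx : MeasurableSet {t : ℝ | ENNReal.ofReal t < h x} :=
          measurableSet_lt ENNReal.measurable_ofReal measurable_const
        rw [← volume_Ioi_inter_setOf_ofReal_lt (h x), Set.inter_comm, ← Measure.restrict_apply hx,
          ← lintegral_indicator_one hx]
        rfl
    _ = ∫⁻ t in Set.Ioi (0 : ℝ), ∫⁻ x,
          {p : α × ℝ | ENNReal.ofReal p.2 < h p.1}.indicator 1 (x, t) ∂μ :=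
        lintegral_lintegral_swap (measurable_one.indicator hmeas).aemeasurable
    _ = _ := by
        refine lintegral_congr fun t => ?_
        rw [← lintegral_indicator_one (measurableSet_lt measurable_const hm)]
        rfl

theorem IsYoungFunction.setOf_lt_eq {φ : ℝ≥0∞ → ℝ≥0∞} (hφ : IsYoungFunction φ) (η : ℝ≥0∞) :
    {x | η < φ x} = Set.Ioi (sInf {x | η < φ x}) := by
  ext x
  refine ⟨fun hx => lt_of_le_of_ne (sInf_le hx) fun heq => ?_, fun hx => ?_⟩
  · have hx0 : x ≠ 0 := by
      rintro rfl
      simp [hφ.map_zero] at hx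
    have : (nhdsWithin x (Set.Iio x)).NeBot :=
      nhdsLT_neBot_of_exists_lt ⟨0, pos_iff_ne_zero.2 hx0⟩
    obtain ⟨y, hy, hyx⟩ := (((hφ.left_continuous x).eventually_const_lt hx).and
      self_mem_nhdsWithin).exists
    exact (heq ▸ sInf_le hy : x ≤ y).not_gt hyx
  · obtain ⟨y, hy, hyx⟩ := sInf_lt_iff.1 (Set.mem_Ioi.1 hx)
    exact lt_of_lt_of_le hy (hφ.mono hyx.le)

theorem lintegral_supMin_le (hN : 0 < N) {f g : ES N → ℝ≥0∞} (hf : Measurable f)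
    (hg : Measurable g) {φ : ℝ≥0∞ → ℝ≥0∞} (hφ : IsYoungFunction φ) {c : ℝ≥0∞} (hc : c ≠ 0)
    (hc' : c ≠ ∞) :
    ∫⁻ x, φ (c * supMin f g x) ≤
      2 ^ (N - 1) * ((∫⁻ x, φ (c * hatT f x)) + ∫⁻ x, φ (c * hatT g x)) := by
  have hφm : Measurable fun x => φ (c * x) := hφ.mono.measurable.comp (measurable_const_mul c)
  have hlt : ∀ (η : ℝ≥0∞), ∃ ξ, ∀ h : ES N → ℝ≥0∞, {x | η < φ (c * h x)} = {x | ξ < h x} := by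
    refine fun η => ⟨sInf {x | η < φ x} / c, fun h => ?_⟩
    ext x
    have := Set.ext_iff.1 (hφ.setOf_lt_eq η) (c * h x)
    simp only [Set.mem_ofPred_eq, Set.mem_Ioi] at this ⊢
    rw [this, ENNReal.div_lt_iff (Or.inl hc) (Or.inl hc'), mul_comm]
  have hlayer : ∀ h : ES N → ℝ≥0∞, AEMeasurable h → ∫⁻ x, φ (c * h x) =
      ∫⁻ t in Set.Ioi (0 : ℝ), volume {x | ENNReal.ofReal t < φ (c * h x)} := fun h hh =>
    lintegral_eq_lintegral_meas_ofReal_lt (hφm.comp_aemeasurable hh)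
  have hanti : ∀ h : ES N → ℝ≥0∞,
      Measurable fun t : ℝ => volume {x | ENNReal.ofReal t < φ (c * h x)} := fun h =>
    Antitone.measurable fun s t hst =>
      measure_mono fun x hx => (ENNReal.ofReal_le_ofReal hst).trans_lt hx
  rw [hlayer _ (aemeasurable_supMin hf hg),
    hlayer _ (measurable_hatT f).aemeasurable,
    hlayer _ (measurable_hatT g).aemeasurable,
    ← lintegral_add_left (hanti _),
    ← lintegral_const_mul' _ _ (ENNReal.pow_ne_top ENNReal.ofNat_ne_top)]
  refine lintegral_mono fun t => ?_
  obtain ⟨ξ, hξ⟩ := hlt (ENNReal.ofReal t)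
  simp only [hξ]
  exact volume_setOf_lt_supMin_le hN f g ξ

theorem IsYoungFunction.map_mul_le {φ : ℝ≥0∞ → ℝ≥0∞} (hφ : IsYoungFunction φ) {a : ℝ≥0∞}
    (ha : a ≤ 1) (x : ℝ≥0∞) : φ (a * x) ≤ a * φ x := by
  simpa [hφ.map_zero] using hφ.convex (x := x) (y := 0) (add_tsub_cancel_of_le ha)

theorem luxNorm_supMin_le {N : ℕ} (hN : 0 < N)
    (f g : ES N → ℝ≥0∞) (hf : Measurable f) (hg : Measurable g)
    (φ : ℝ≥0∞ → ℝ≥0∞) (hφ : IsYoungFunction φ) :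
    AEMeasurable (supMin f g) (volume : Measure (ES N)) ∧
      luxNorm φ (supMin f g) ≤ 2 ^ (N - 1) * (luxNorm φ (hatT f) + luxNorm φ (hatT g)) := by
  refine ⟨aemeasurable_supMin hf hg, ?_⟩
  set C : ℝ≥0∞ := 2 ^ (N - 1)
  have hC1 : 1 ≤ C := one_le_pow₀ one_le_two
  have hC0 : C ≠ 0 := (zero_lt_one.trans_le hC1).ne'
  have hCt : C ≠ ∞ := ENNReal.pow_ne_top ENNReal.ofNat_ne_top
  have key : ∀ r s : ℝ≥0∞, 0 < r → ∫⁻ x, φ (r⁻¹ * hatT f x) ≤ 1 → 0 < s →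
      ∫⁻ x, φ (s⁻¹ * hatT g x) ≤ 1 → luxNorm φ (supMin f g) ≤ C * (r + s) := by
    intro r s hr hrf hs hsg
    rcases eq_or_ne (r + s) ∞ with htop | htop
    · rw [htop, ENNReal.mul_top hC0]
      exact le_top
    obtain ⟨hrt, hst⟩ := ENNReal.add_ne_top.1 htop
    have hrs : r + s ≠ 0 := (hr.trans_le le_self_add).ne'
    have hR0 : C * (r + s) ≠ 0 := mul_ne_zero hC0 hrs
    have hRt : C * (r + s) ≠ ∞ := ENNReal.mul_ne_top hCt htop
    have hR1 : r + s ≤ C * (r + s) := le_mul_of_one_le_left' hC1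
    have bound : ∀ (q : ℝ≥0∞) (h : ES N → ℝ≥0∞), 0 < q → q ≤ r + s →
        ∫⁻ x, φ (q⁻¹ * hatT h x) ≤ 1 →
        ∫⁻ x, φ ((C * (r + s))⁻¹ * hatT h x) ≤ (C * (r + s))⁻¹ * q := by
      intro q h hq hqR hint
      have hqt : q ≠ ∞ := (hqR.trans_lt htop.lt_top).ne
      have ha : (C * (r + s))⁻¹ * q ≤ 1 := by
        rw [mul_comm, ← div_eq_mul_inv]
        exact ENNReal.div_le_of_le_mul (by simpa using hqR.trans hR1)
      calc ∫⁻ x, φ ((C * (r + s))⁻¹ * hatT h x)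
          ≤ ∫⁻ x, (C * (r + s))⁻¹ * q * φ (q⁻¹ * hatT h x) := by
            refine lintegral_mono fun x => ?_
            refine le_of_eq_of_le ?_ (hφ.map_mul_le ha _)
            rw [← mul_assoc, mul_assoc _ q, ENNReal.mul_inv_cancel hq.ne' hqt, mul_one]
        _ = (C * (r + s))⁻¹ * q * ∫⁻ x, φ (q⁻¹ * hatT h x) :=
            lintegral_const_mul' _ _ (ENNReal.mul_ne_top (ENNReal.inv_ne_top.2 hR0) hqt)
        _ ≤ (C * (r + s))⁻¹ * q := mul_le_of_le_one_right' hint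
    refine sInf_le ⟨pos_iff_ne_zero.2 hR0, ?_⟩
    calc ∫⁻ x, φ ((C * (r + s))⁻¹ * supMin f g x)
        ≤ C * ((∫⁻ x, φ ((C * (r + s))⁻¹ * hatT f x)) + ∫⁻ x, φ ((C * (r + s))⁻¹ * hatT g x)) :=
          lintegral_supMin_le hN hf hg hφ (ENNReal.inv_ne_zero.2 hRt) (ENNReal.inv_ne_top.2 hR0)
      _ ≤ C * ((C * (r + s))⁻¹ * r + (C * (r + s))⁻¹ * s) := by
          gcongr
          · exact bound r f hr le_self_add hrf
          · exact bound s g hs le_add_self hsg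
      _ = 1 := by
          rw [← mul_add, mul_left_comm, ENNReal.inv_mul_cancel hR0 hRt]
  unfold luxNorm at key ⊢
  rw [ENNReal.sInf_add, ENNReal.mul_iInf_of_ne hC0 hCt]
  refine le_iInf fun r => ?_
  rw [ENNReal.mul_iInf_of_ne hC0 hCt]
  refine le_iInf fun hr => ?_
  rw [ENNReal.add_sInf, ENNReal.mul_iInf_of_ne hC0 hCt]
  refine le_iInf fun s => ?_
  rw [ENNReal.mul_iInf_of_ne hC0 hCt]
  exact le_iInf fun hs => key r s hr.1 hr.2 hs.1 hs.2

end
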